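/- Let L be a finite modular non-distributive lattice and I_L ⊂ S = K[L] its join-meet ideal. Then the Castelnuovo–Mumford regularity of S/I_L is at least 3. -/

import Mathlib

open MvPolynomial

/-- The join-meet ideal `I_L` of a finite lattice `L`, generated by
`x_a x_b − x_{a∧b} x_{a∨b}` for incomparable `a, b ∈ L`. -/
noncomputable def joinMeetIdeal (K : Type*) [Field K] (L : Type*) [Lattice L] :
    Ideal (MvPolynomial L K) :=
  Ideal.span {f | ∃ a b : L, ¬ a ≤ b ∧ ¬ b ≤ a ∧ f = X a * X b - X (a ⊓ b) * X (a ⊔ b)}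

def mdeg {σ : Type*} (m : σ →₀ ℕ) : ℕ := m.sum fun _ e => e

/-- A minimal graded free resolution
`⋯ → F_{i+1} → F_i → ⋯ → F_0 → S/I → 0` of `S/I` over `S = K[x_s : s ∈ σ]`.
`F_i` is free with finite homogeneous basis `B i`, the basis element `b : B i` having
degree `deg i b`; the differentials are graded and have entries in the graded maximal
ideal (minimality); `ε` is a lift of the augmentation `F_0 → S/I`. -/
structure MinGradedFreeRes (K : Type*) [Field K] (σ : Type*) (I : Ideal (MvPolynomial σ K)) where
  B : ℕ → Type
  finB : ∀ i, Finite (B i)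
  deg : ∀ i, B i → ℕ
  d : ∀ i, ((B (i + 1)) →₀ MvPolynomial σ K) →ₗ[MvPolynomial σ K] ((B i) →₀ MvPolynomial σ K)
  ε : ((B 0) →₀ MvPolynomial σ K) →ₗ[MvPolynomial σ K] MvPolynomial σ K
  ε_homog : ∀ b : B 0, (ε (Finsupp.single b 1)).IsHomogeneous (deg 0 b)
  surj : ∀ s : MvPolynomial σ K, ∃ t, ε t - s ∈ I
  exact0 : LinearMap.range (d 0) = Submodule.comap ε (I : Submodule _ _)
  exact : ∀ i, LinearMap.range (d (i + 1)) = LinearMap.ker (d i)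
  homog : ∀ i (b : B (i + 1)) (c : B i),
    ∀ m ∈ ((d i (Finsupp.single b 1)) c).support, mdeg m + deg i c = deg (i + 1) b
  minimal : ∀ i (b : B (i + 1)) (c : B i), coeff 0 ((d i (Finsupp.single b 1)) c) = 0

/-- The graded Betti number `β_{i,j}(S/I)` read off from a minimal graded free resolution:
the number of basis elements of `F_i` of degree `j`. -/
noncomputable def MinGradedFreeRes.betti {K : Type*} [Field K] {σ : Type*}
    {I : Ideal (MvPolynomial σ K)} (F : MinGradedFreeRes K σ I) (i j : ℕ) : ℕ :=
  Nat.card {b : F.B i // F.deg i b = j}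

/-
A modular non-distributive lattice contains a diamond, and a diamond with minimal top yields an
interval `[u, v]` with at least three interior elements, any two of which meet in `u` and join to
`v`. Over an infinite extension `k` of `K`, send `x_u ↦ θ s`, `x_v ↦ s`, where `s = ∑ X_l` is the
sum of the `n` interior variables, and send the variables outside `[u, v]` to `0`. The image of the
join-meet ideal `I` is `J = (X_i X_j - θ s² : i ≠ j)`; for generic `θ`, the quotient by `J` has
finite length and is nonzero in degree three.

Each element of `I` acts null-homotopically on a graded resolution of `S/I`, by a graded homotopy;
after base change, so does each element of `J`, in particular a power of each of the `n` variables.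
These powers form a regular sequence of length `n`, along which the composite of the `n` homotopies
can be descended; counting degrees, if `F_n` is generated in degrees below `n + r`, then `J`
contains all forms of degree `r`. Taking `r = 3` gives a contradiction.
-/

section DiamondsInModularLattices

variable {L : Type*} [Lattice L]

/-- The elements `u, a, b, c, v` form a diamond sublattice `M₃` with bottom `u` and top `v`. -/
structure IsDiamond (u a b c v : L) : Prop where
  lt : u < v
  inf_ab : a ⊓ b = u
  inf_bc : b ⊓ c = u
  inf_ca : c ⊓ a = u
  sup_ab : a ⊔ b = v
  sup_bc : b ⊔ c = v
  sup_ca : c ⊔ a = v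

theorem IsDiamond.rotate {u a b c v : L} (h : IsDiamond u a b c v) : IsDiamond u b c a v :=
  ⟨h.lt, h.inf_bc, h.inf_ca, h.inf_ab, h.sup_bc, h.sup_ca, h.sup_ab⟩

theorem IsDiamond.bot_lt {u a b c v : L} (h : IsDiamond u a b c v) : u < a := by
  refine lt_of_le_of_ne (h.inf_ab ▸ inf_le_left) fun hua => h.lt.ne ?_
  have hb : b = v := by rw [← h.sup_ab, sup_eq_right.2 (hua ▸ h.inf_ab ▸ inf_le_right)]
  have hc : c = v := by rw [← h.sup_ca, sup_eq_left.2 (hua ▸ h.inf_ca ▸ inf_le_left)]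
  rw [← h.inf_bc, hb, hc, inf_idem]

theorem IsDiamond.ne {u a b c v : L} (h : IsDiamond u a b c v) : a ≠ b := by
  rintro rfl
  exact h.bot_lt.ne (by rw [← h.inf_ab, inf_idem])

/-- The projection of `x` to the interval between the lower and the upper median of `x`, `y`, `z`;
the projections of three elements violating distributivity are the atoms of a diamond. -/
def medianProj (x y z : L) : L := (x ⊓ (y ⊔ z)) ⊔ (y ⊓ z)

section Modular

variable [IsModularLattice L]

theorem medianProj_inf_medianProj (x y z : L) :
    medianProj x y z ⊓ medianProj y z x = x ⊓ y ⊔ y ⊓ z ⊔ z ⊓ x := by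
  have hzx : z ⊓ x ≤ medianProj x y z :=
    le_sup_of_le_left (le_inf inf_le_right (inf_le_left.trans le_sup_right))
  have hyz : y ⊓ z ≤ y ⊓ (z ⊔ x) := le_inf inf_le_left (inf_le_right.trans le_sup_left)
  have hxy : (x ⊓ (y ⊔ z)) ⊓ (y ⊓ (z ⊔ x)) = x ⊓ y :=
    le_antisymm (inf_le_inf inf_le_left inf_le_left)
      (le_inf (inf_le_inf_left x le_sup_left)
        (le_inf inf_le_right (inf_le_left.trans le_sup_right)))
  calc medianProj x y z ⊓ medianProj y z x
      = z ⊓ x ⊔ y ⊓ (z ⊔ x) ⊓ medianProj x y z := by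
        rw [inf_comm, medianProj.eq_def y z x, sup_comm (y ⊓ (z ⊔ x)), sup_inf_assoc_of_le _ hzx]
    _ = z ⊓ x ⊔ (y ⊓ z ⊔ x ⊓ y) := by
        rw [inf_comm (y ⊓ (z ⊔ x)), medianProj, sup_comm (x ⊓ (y ⊔ z)),
          sup_inf_assoc_of_le _ hyz, hxy]
    _ = x ⊓ y ⊔ y ⊓ z ⊔ z ⊓ x := by rw [sup_comm, sup_comm (y ⊓ z)]

theorem toDual_medianProj (x y z : L) :
    OrderDual.toDual (medianProj x y z) =
      medianProj (OrderDual.toDual x) (OrderDual.toDual y) (OrderDual.toDual z) := by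
  change (x ⊓ (y ⊔ z)) ⊔ (y ⊓ z) = (x ⊔ (y ⊓ z)) ⊓ (y ⊔ z)
  rw [sup_comm, sup_comm x, sup_inf_assoc_of_le x (inf_le_left.trans le_sup_left)]

theorem medianProj_sup_medianProj (x y z : L) :
    medianProj x y z ⊔ medianProj y z x = (x ⊔ y) ⊓ (y ⊔ z) ⊓ (z ⊔ x) :=
  OrderDual.toDual.injective <| by
    rw [toDual_sup, toDual_medianProj, toDual_medianProj]
    exact medianProj_inf_medianProj _ _ _

theorem inf_sup_eq_of_median_eq {x y z : L}
    (h : x ⊓ y ⊔ y ⊓ z ⊔ z ⊓ x = (x ⊔ y) ⊓ (y ⊔ z) ⊓ (z ⊔ x)) :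
    x ⊓ (y ⊔ z) = (x ⊓ y) ⊔ (x ⊓ z) := by
  have hlower : (x ⊓ y ⊔ y ⊓ z ⊔ z ⊓ x) ⊓ x = x ⊓ y ⊔ x ⊓ z := by
    rw [sup_right_comm, inf_comm z x, sup_inf_assoc_of_le _ (sup_le inf_le_left inf_le_left)]
    exact sup_eq_left.2 (le_sup_of_le_left (le_inf inf_le_right (inf_le_left.trans inf_le_left)))
  have hupper : (x ⊔ y) ⊓ (y ⊔ z) ⊓ (z ⊔ x) ⊓ x = x ⊓ (y ⊔ z) := by
    rw [inf_assoc, inf_eq_right.2 (le_sup_right : x ≤ z ⊔ x), inf_right_comm,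
      inf_eq_right.2 (le_sup_left : x ≤ x ⊔ y)]
  rw [← hlower, h, hupper]

theorem exists_isDiamond (hnd : ¬ ∀ x y z : L, x ⊓ (y ⊔ z) = (x ⊓ y) ⊔ (x ⊓ z)) :
    ∃ u a b c v : L, IsDiamond u a b c v := by
  push Not at hnd
  obtain ⟨x, y, z, hne⟩ := hnd
  refine ⟨x ⊓ y ⊔ y ⊓ z ⊔ z ⊓ x, medianProj x y z, medianProj y z x, medianProj z x y,
    (x ⊔ y) ⊓ (y ⊔ z) ⊓ (z ⊔ x),
    lt_of_le_of_ne ?_ fun h => hne (inf_sup_eq_of_median_eq h),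
    medianProj_inf_medianProj x y z, ?_, ?_, medianProj_sup_medianProj x y z, ?_, ?_⟩
  · rw [← medianProj_inf_medianProj, ← medianProj_sup_medianProj]
    exact inf_le_sup
  · rw [medianProj_inf_medianProj, sup_comm, sup_assoc]
  · rw [medianProj_inf_medianProj, sup_assoc, sup_comm]
  · rw [medianProj_sup_medianProj, inf_comm, inf_assoc]
  · rw [medianProj_sup_medianProj, inf_assoc, inf_comm]

theorem IsDiamond.exists_shrink {u a b c v a' : L} (h : IsDiamond u a b c v) (hua' : u < a')
    (ha'a : a' < a) : ∃ b' c' v', v' < v ∧ IsDiamond u a' b' c' v' := by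
  have hub : u ≤ b := h.inf_ab ▸ inf_le_right
  have huc : u ≤ c := h.inf_bc ▸ inf_le_right
  have hav : a ≤ v := h.sup_ab ▸ le_sup_left
  have hbv : b ≤ v := h.sup_ab ▸ le_sup_right
  have hcv : c ≤ v := h.sup_bc ▸ le_sup_right
  have hub' : u ≤ b ⊓ (a' ⊔ c) := le_inf hub (hua'.le.trans le_sup_left)
  have huc' : u ≤ c ⊓ (a' ⊔ b) := le_inf huc (hua'.le.trans le_sup_left)
  refine ⟨b ⊓ (a' ⊔ c), c ⊓ (a' ⊔ b), (a' ⊔ b) ⊓ (a' ⊔ c), ?_, ?_, ?_, ?_, ?_, ?_, ?_, ?_⟩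
  · refine (inf_le_left.trans (sup_le (ha'a.le.trans hav) hbv)).lt_of_ne fun hv => ha'a.not_ge ?_
    have hva' : v ≤ a' ⊔ b := hv ▸ inf_le_left
    calc a ≤ (a' ⊔ b) ⊓ a := le_inf (hav.trans hva') le_rfl
      _ = a' := by rw [sup_inf_assoc_of_le b ha'a.le, inf_comm, h.inf_ab, sup_eq_left.2 hua'.le]
  · exact hua'.trans_le (le_inf le_sup_left le_sup_left)
  · exact le_antisymm (h.inf_ab ▸ inf_le_inf ha'a.le inf_le_left) (le_inf hua'.le hub')
  · exact le_antisymm (h.inf_bc ▸ inf_le_inf inf_le_left inf_le_left) (le_inf hub' huc')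
  · exact le_antisymm (h.inf_ca ▸ inf_le_inf inf_le_left ha'a.le) (le_inf huc' hua'.le)
  · rw [← sup_inf_assoc_of_le b le_sup_left]
  · have hb' : b ⊓ (a' ⊔ c) ≤ a' ⊔ b := inf_le_left.trans le_sup_right
    rw [← sup_inf_assoc_of_le c hb', sup_comm _ c, ← sup_inf_assoc_of_le b le_sup_right,
      sup_comm c b, h.sup_bc, inf_eq_right.2 (sup_le (ha'a.le.trans hav) hcv), inf_comm]
  · rw [sup_comm, ← sup_inf_assoc_of_le c le_sup_left, inf_comm]

theorem pairwise_Ioo_of_covBy_covBy {u a v : L} (hua : u ⋖ a) (hav : a ⋖ v) :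
    (Set.Ioo u v).Pairwise fun x y => x ⊓ y = u ∧ x ⊔ y = v := by
  have complement : ∀ {a x : L}, u ⋖ a → a ⋖ v → x ∈ Set.Ioo u v → a ≠ x →
      a ⊓ x = u ∧ a ⊔ x = v := by
    rintro a x hua hav ⟨hux, hxv⟩ hax
    refine ⟨(hua.eq_or_eq (le_inf hua.le hux.le) inf_le_left).resolve_right fun h => ?_,
      (hav.eq_or_eq le_sup_left (sup_le hav.le hxv.le)).resolve_left fun h => ?_⟩
    · exact (hav.eq_or_eq (inf_eq_left.1 h) hxv.le).elim hax.symm hxv.ne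
    · exact (hua.eq_or_eq hux.le (sup_eq_left.1 h)).elim hux.ne' hax.symm
  intro x hx y hy hxy
  obtain rfl | hax := eq_or_ne a x
  · exact complement hua hav hy hxy
  · obtain ⟨hinf, hsup⟩ := complement hua hav hx hax
    exact complement (hinf ▸ IsLowerModularLattice.inf_covBy_of_covBy_sup (hsup ▸ hav))
      (hsup ▸ IsUpperModularLattice.covBy_sup_of_inf_covBy (hinf ▸ hua)) hy hxy

theorem exists_Ioo_pairwise_of_not_distrib [Finite L]
    (hnd : ¬ ∀ x y z : L, x ⊓ (y ⊔ z) = (x ⊓ y) ⊔ (x ⊓ z)) :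
    ∃ u v : L, 2 < (Set.Ioo u v).ncard ∧
      (Set.Ioo u v).Pairwise fun x y => x ⊓ y = u ∧ x ⊔ y = v := by
  obtain ⟨v, ⟨u, a, b, c, h⟩, hmin⟩ := (wellFounded_lt (α := L)).has_min
    {v | ∃ u a b c : L, IsDiamond u a b c v}
    (let ⟨u, a, b, c, v, h⟩ := exists_isDiamond hnd; ⟨v, u, a, b, c, h⟩)
  have atom_covBy : ∀ {a b c : L}, IsDiamond u a b c v → u ⋖ a ∧ b ⋖ v := by
    intro a b c h
    have hua : u ⋖ a := ⟨h.bot_lt, fun a' hua' ha'a =>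
      let ⟨b', c', v', hv', h'⟩ := h.exists_shrink hua' ha'a
      hmin v' ⟨u, a', b', c', h'⟩ hv'⟩
    exact ⟨hua, h.sup_ab ▸ IsUpperModularLattice.covBy_sup_of_inf_covBy (h.inf_ab ▸ hua)⟩
  obtain ⟨hua, hbv⟩ := atom_covBy h
  obtain ⟨hub, hcv⟩ := atom_covBy h.rotate
  obtain ⟨huc, hav⟩ := atom_covBy h.rotate.rotate
  refine ⟨u, v, ?_, pairwise_Ioo_of_covBy_covBy hua hav⟩
  exact (Set.two_lt_ncard_iff (Set.toFinite _)).2 ⟨a, b, c, ⟨hua.lt, hav.lt⟩, ⟨hub.lt, hbv.lt⟩,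
    ⟨huc.lt, hcv.lt⟩, h.ne, h.rotate.rotate.ne.symm, h.rotate.ne⟩

end Modular

end DiamondsInModularLattices

section NullHomotopies

variable {R : Type*} [CommRing R] {C : ℕ → Type*} [∀ i, AddCommGroup (C i)] [∀ i, Module R (C i)]
  {d : ∀ i, C (i + 1) →ₗ[R] C i}

/-- `H` is a homotopy from multiplication by `g` to zero on the nonnegatively graded complex
`(C, d)`. -/
structure IsNullHomotopy (d : ∀ i, C (i + 1) →ₗ[R] C i) (g : R)
    (H : ∀ i, C i →ₗ[R] C (i + 1)) : Prop where
  zero : d 0 ∘ₗ H 0 = g • LinearMap.id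
  succ : ∀ i, d (i + 1) ∘ₗ H (i + 1) + H i ∘ₗ d i = g • LinearMap.id

theorem IsNullHomotopy.d_apply_zero {g : R} {H : ∀ i, C i →ₗ[R] C (i + 1)}
    (h : IsNullHomotopy d g H) (w : C 0) : d 0 (H 0 w) = g • w :=
  LinearMap.congr_fun h.zero w

theorem IsNullHomotopy.d_apply_succ {g : R} {H : ∀ i, C i →ₗ[R] C (i + 1)}
    (h : IsNullHomotopy d g H) (i : ℕ) (w : C (i + 1)) :
    d (i + 1) (H (i + 1) w) = g • w - H i (d i w) :=
  eq_sub_of_add_eq (LinearMap.congr_fun (h.succ i) w)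

variable {P : Type*} {g : P → R} {H : P → ∀ i, C i →ₗ[R] C (i + 1)}

theorem mem_span_insert_smul_top {M : Type*} [AddCommGroup M] [Module R M] {s : Set R} {a : R}
    {x : M} : x ∈ Ideal.span (insert a s) • (⊤ : Submodule R M) ↔
      ∃ y, x - a • y ∈ Ideal.span s • (⊤ : Submodule R M) := by
  rw [Ideal.span_insert, Submodule.sup_smul, Submodule.ideal_span_singleton_smul,
    Submodule.mem_sup]
  constructor
  · rintro ⟨_, hy, z, hz, rfl⟩
    obtain ⟨y, -, rfl⟩ := (Submodule.mem_smul_pointwise_iff_exists _ _ _).1 hy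
    exact ⟨y, by rwa [add_sub_cancel_left]⟩
  · rintro ⟨y, hy⟩
    exact ⟨_, Submodule.smul_mem_pointwise_smul y a ⊤ trivial, _, hy, add_sub_cancel _ _⟩

theorem exists_descent (hd : ∀ i, d i ∘ₗ d (i + 1) = 0) (hH : ∀ p, IsNullHomotopy d (g p) (H p))
    (hreg : ∀ (T : Finset P) (p : P), p ∉ T → ∀ i,
      IsSMulRegular (C i ⧸ (Ideal.span (g '' T) • (⊤ : Submodule R (C i)))) (g p))
    (W : ∀ i, Set (C i)) (hW : ∀ p i, Set.MapsTo (H p i) (W i) (W (i + 1)))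
    {e : C 0} (he : e ∈ W 0) (T : Finset P) :
    ∃ c ∈ W T.card,
      (∀ p, d T.card (H p T.card c) - g p • c ∈ Ideal.span (g '' T) • (⊤ : Submodule R _)) ∧
      ∀ u : R, u • c ∈ Ideal.span (g '' T) • ⊤ ⊔ LinearMap.range (d T.card) →
        u • e ∈ LinearMap.range (d 0) := by
  classical
  induction T using Finset.induction_on with
  | empty =>
    refine ⟨e, he, fun p => ?_, fun u hu => ?_⟩
    · change d 0 (H p 0 e) - g p • e ∈ _
      rw [(hH p).d_apply_zero, sub_self]
      exact zero_mem _
    · rwa [Finset.coe_empty, Set.image_empty, Ideal.span_empty, Submodule.bot_smul,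
        bot_sup_eq] at hu
  | insert p T hp ih =>
    obtain ⟨c, hcW, hc, hce⟩ := ih
    rw [Finset.card_insert_of_notMem hp, Finset.coe_insert, Set.image_insert_eq]
    refine ⟨H p _ c, hW p _ hcW, fun q => ?_, fun u hu => ?_⟩
    · rw [(hH q).d_apply_succ, sub_sub_cancel_left, neg_mem_iff, mem_span_insert_smul_top]
      refine ⟨H q _ c, ?_⟩
      rw [← map_smul, ← map_sub]
      exact Submodule.smul_top_le_comap_smul_top _ (H q _) (hc p)
    · obtain ⟨x, hx, -, ⟨z, rfl⟩, hxz⟩ := Submodule.mem_sup.1 hu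
      obtain ⟨y, hxy⟩ := mem_span_insert_smul_top.1 hx
      have hdx : d _ x = u • d _ (H p _ c) := by
        rw [← map_smul, ← hxz, map_add, ← LinearMap.comp_apply, hd, LinearMap.zero_apply, add_zero]
      have hgy : g p • (u • c - d _ y) ∈ Ideal.span (g '' T) • (⊤ : Submodule R _) := by
        have := sub_mem
          (Submodule.mem_comap.1 (Submodule.smul_top_le_comap_smul_top _ (d _) hxy))
          (Submodule.smul_mem _ u (hc p))
        rw [map_sub, hdx, map_smul] at this
        convert this using 1
        module
      have huc := mem_of_isSMulRegular_quotient_of_smul_mem (hreg T p hp _) hgy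
      exact hce u (Submodule.mem_sup.2 ⟨_, huc, _, ⟨y, rfl⟩, sub_add_cancel _ _⟩)

theorem smul_mem_range_of_forall_mem_smul_top [Fintype P] (hd : ∀ i, d i ∘ₗ d (i + 1) = 0)
    (hH : ∀ p, IsNullHomotopy d (g p) (H p))
    (hreg : ∀ (T : Finset P) (p : P), p ∉ T → ∀ i,
      IsSMulRegular (C i ⧸ (Ideal.span (g '' T) • (⊤ : Submodule R (C i)))) (g p))
    (W : ∀ i, Set (C i)) (hW : ∀ p i, Set.MapsTo (H p i) (W i) (W (i + 1)))
    {e : C 0} (he : e ∈ W 0) {u : R}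
    (hu : ∀ c ∈ W (Fintype.card P), u • c ∈ Ideal.span (Set.range g) • (⊤ : Submodule R _)) :
    u • e ∈ LinearMap.range (d 0) := by
  obtain ⟨c, hcW, -, hc⟩ := exists_descent hd hH hreg W hW he Finset.univ
  have := hu c hcW
  rw [← Set.image_univ, ← Finset.coe_univ] at this
  exact hc u (Submodule.mem_sup_left this)

end NullHomotopies

section HomogeneousComponents

variable {σ R : Type*} [CommRing R] {x : MvPolynomial σ R} {a : ℕ}

theorem homogeneousComponent_mul_of_isHomogeneous (hx : x.IsHomogeneous a)
    (r : MvPolynomial σ R) (e : ℕ) :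
    homogeneousComponent e (r * x) = if a ≤ e then homogeneousComponent (e - a) r * x else 0 := by
  induction r using MvPolynomial.induction_on' with
  | monomial m c =>
    have hm : (monomial m c).IsHomogeneous m.degree := isHomogeneous_monomial c rfl
    rw [homogeneousComponent_of_mem (hm.mul hx), homogeneousComponent_of_mem hm, ite_zero_mul,
      ← ite_and]
    exact if_congr (by omega) rfl rfl
  | add p q hp hq => simp only [add_mul, map_add, hp, hq, ite_add_zero]

theorem eval_one_eq_sum_eval_single_of_isHomogeneous_one [Fintype σ] [DecidableEq σ]
    (hx : x.IsHomogeneous 1) : eval 1 x = ∑ l, eval (Pi.single l 1) x := by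
  rw [← mem_homogeneousSubmodule, homogeneousSubmodule_one_eq_span_X] at hx
  induction hx using Submodule.span_induction with
  | mem _ h => obtain ⟨p, rfl⟩ := h; simp [Pi.single_apply]
  | zero => simp
  | add p q _ _ hp hq => simp only [map_add, hp, hq, Finset.sum_add_distrib]
  | smul c p _ hp => simp only [smul_eval, hp, Finset.mul_sum]

end HomogeneousComponents

section PowersOfVariables

variable {σ R : Type*} [CommRing R] {N : ℕ} {T : Set σ}

theorem mem_span_X_pow_iff {x : MvPolynomial σ R} :
    x ∈ Ideal.span ((fun p => (X p : MvPolynomial σ R) ^ N) '' T) ↔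
      ∀ m ∈ x.support, ∃ p ∈ T, N ≤ m p := by
  have himage : (fun p => (X p : MvPolynomial σ R) ^ N) '' T =
      (fun s => monomial s (1 : R)) '' ((fun p => Finsupp.single p N) '' T) := by
    simp only [Set.image_image, X_pow_eq_monomial]
  rw [himage, mem_ideal_span_monomial_image]
  simp only [Set.exists_mem_image, Finsupp.single_le_iff]

theorem mem_span_X_pow_of_X_pow_mul_mem {p : σ} (hp : p ∉ T) {x : MvPolynomial σ R}
    (hx : X p ^ N * x ∈ Ideal.span ((fun p => (X p : MvPolynomial σ R) ^ N) '' T)) :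
    x ∈ Ideal.span ((fun p => (X p : MvPolynomial σ R) ^ N) '' T) := by
  classical
  rw [mem_span_X_pow_iff] at hx ⊢
  intro m hm
  have hm' : Finsupp.single p N + m ∈ (X p ^ N * x).support := by
    rwa [X_pow_eq_monomial, mem_support_iff, coeff_monomial_mul, one_mul, ← mem_support_iff]
  obtain ⟨q, hq, hNq⟩ := hx _ hm'
  have hpq : p ≠ q := fun h => hp (h ▸ hq)
  exact ⟨q, hq, by simpa only [Finsupp.add_apply, Finsupp.single_eq_of_ne hpq.symm, zero_add]
    using hNq⟩

-- Pigeonhole: a monomial of degree larger than `card σ * N` has an exponent larger than `N`.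
theorem idealOfVars_pow_le_span_X_pow [Fintype σ] {E : ℕ} (hE : Fintype.card σ * N < E) :
    idealOfVars σ R ^ E ≤ Ideal.span (Set.range fun p => (X p : MvPolynomial σ R) ^ (N + 1)) := by
  intro x hx
  rw [← Set.image_univ, mem_span_X_pow_iff]
  intro m hm
  by_contra! hsmall
  refine hE.not_ge (((mem_pow_idealOfVars_iff E x).1 hx m hm).trans ?_)
  rw [Finsupp.degree_eq_sum, ← smul_eq_mul]
  exact Finset.sum_le_card_nsmul _ _ _ fun p _ => Nat.le_of_lt_succ (hsmall p trivial)

theorem mem_ideal_smul_top_finsupp_iff {A B : Type*} [CommRing A] {J : Ideal A} {v : B →₀ A} :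
    v ∈ J • (⊤ : Submodule A (B →₀ A)) ↔ ∀ b, v b ∈ J := by
  constructor
  · intro hv b
    have := Submodule.smul_top_le_comap_smul_top J (Finsupp.lapply b) hv
    rwa [Submodule.mem_comap, Ideal.smul_eq_mul, Ideal.mul_top] at this
  · intro hv
    rw [← v.sum_single]
    refine sum_mem fun b _ => ?_
    rw [← mul_one (v b), ← smul_eq_mul, ← Finsupp.smul_single]
    exact Submodule.smul_mem_smul (hv b) trivial

theorem isSMulRegular_X_pow_quotient {p : σ} (hp : p ∉ T) (B : Type*) :
    IsSMulRegular ((B →₀ MvPolynomial σ R) ⧸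
      Ideal.span ((fun p => (X p : MvPolynomial σ R) ^ N) '' T) •
        (⊤ : Submodule (MvPolynomial σ R) (B →₀ MvPolynomial σ R)))
      (X p ^ N : MvPolynomial σ R) := by
  rw [isSMulRegular_quotient_iff_mem_of_smul_mem]
  intro v hv
  rw [mem_ideal_smul_top_finsupp_iff] at hv ⊢
  exact fun b => mem_span_X_pow_of_X_pow_mul_mem hp (hv b)

end PowersOfVariables

section GradedFreeModules

variable {σ R A B C : Type*} [CommRing R] {degA : A → ℕ} {degB : B → ℕ} {degC : C → ℕ}
  {a e e' E : ℕ}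

/-- The homogeneous vectors of degree `E` in the free module over a polynomial ring whose basis
vector indexed by `b` has degree `degB b`. -/
def gradedPiece (degB : B → ℕ) (E : ℕ) : Submodule R (B →₀ MvPolynomial σ R) where
  carrier := {w | ∀ b m, coeff m (w b) ≠ 0 → m.degree + degB b = E}
  zero_mem' _ _ h := absurd (coeff_zero _) h
  add_mem' {w w'} hw hw' b m h := by
    by_cases hm : coeff m (w b) = 0
    · exact hw' b m fun hm' => h (by rw [Finsupp.add_apply, coeff_add, hm, hm', add_zero])
    · exact hw b m hm
  smul_mem' r w hw b m h := hw b m fun hm => h (by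
    rw [Finsupp.smul_apply, coeff_smul, hm, smul_zero])

theorem isHomogeneous_apply_of_mem_gradedPiece {w : B →₀ MvPolynomial σ R}
    (hw : w ∈ gradedPiece degB E) (b : B) : (w b).IsHomogeneous (E - degB b) := fun m hm => by
  rw [← hw b m hm, Nat.add_sub_cancel, Finsupp.degree_eq_weight_one]
  rfl

theorem le_of_mem_gradedPiece {w : B →₀ MvPolynomial σ R} (hw : w ∈ gradedPiece degB E) {b : B}
    (hb : w b ≠ 0) : degB b ≤ E := by
  obtain ⟨m, hm⟩ := ne_zero_iff.1 hb
  exact Nat.le.intro ((add_comm _ _).trans (hw b m hm))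

theorem smul_mem_gradedPiece {p : MvPolynomial σ R} (hp : p.IsHomogeneous a)
    {w : B →₀ MvPolynomial σ R} (hw : w ∈ gradedPiece degB E) :
    p • w ∈ gradedPiece degB (E + a) := by
  classical
  intro b m hm
  rw [Finsupp.smul_apply, smul_eq_mul, coeff_mul] at hm
  obtain ⟨⟨m₁, m₂⟩, hsum, hne⟩ := Finset.exists_ne_zero_of_sum_ne_zero hm
  have h₁ : m₁.degree = a := by
    rw [Finsupp.degree_eq_weight_one]
    exact hp (left_ne_zero_of_mul hne)
  have h₂ : m₂.degree + degB b = E := hw b m₂ (right_ne_zero_of_mul hne)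
  obtain rfl : m₁ + m₂ = m := Finset.HasAntidiagonal.mem_antidiagonal.1 hsum
  rw [map_add, h₁, ← h₂]
  ring

theorem single_mem_gradedPiece {p : MvPolynomial σ R} (hp : p.IsHomogeneous a) (b : B) :
    Finsupp.single b p ∈ gradedPiece degB (a + degB b) := by
  classical
  intro c m hm
  obtain rfl | hbc := eq_or_ne b c
  · rw [Finsupp.single_eq_same] at hm
    rw [Finsupp.degree_eq_weight_one, ← hp hm]
    rfl
  · rw [Finsupp.single_eq_of_ne' hbc] at hm
    exact absurd (coeff_zero m) hm

theorem single_one_mem_gradedPiece (b : B) :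
    Finsupp.single b (1 : MvPolynomial σ R) ∈ gradedPiece degB (degB b) := by
  simpa only [zero_add] using single_mem_gradedPiece (isHomogeneous_one σ R) b

/-- The projection of a graded free module onto its homogeneous part of degree `E`. -/
noncomputable def gradedProj (degB : B → ℕ) (E : ℕ) :
    (B →₀ MvPolynomial σ R) →ₗ[R] (B →₀ MvPolynomial σ R) :=
  Finsupp.lsum R fun b => Finsupp.lsingle b ∘ₗ
    if degB b ≤ E then homogeneousComponent (E - degB b) else 0

theorem gradedProj_apply (w : B →₀ MvPolynomial σ R) (b : B) :
    gradedProj degB E w b = if degB b ≤ E then homogeneousComponent (E - degB b) (w b) else 0 := by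
  classical
  induction w using Finsupp.induction_linear with
  | zero => simp
  | add w w' hw hw' => simp only [map_add, Finsupp.add_apply, hw, hw', ite_add_zero]
  | single c p =>
    obtain rfl | hbc := eq_or_ne c b
    · split_ifs with h <;> simp [gradedProj, h]
    · simp [gradedProj, Finsupp.single_eq_of_ne' hbc]

theorem coeff_gradedProj (w : B →₀ MvPolynomial σ R) (b : B) (m : σ →₀ ℕ) :
    coeff m (gradedProj degB E w b) = if m.degree + degB b = E then coeff m (w b) else 0 := by
  rw [gradedProj_apply, apply_ite (coeff m), coeff_homogeneousComponent, coeff_zero, ← ite_and]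
  exact if_congr (by omega) rfl rfl

theorem gradedProj_mem_gradedPiece (w : B →₀ MvPolynomial σ R) :
    gradedProj degB E w ∈ gradedPiece degB E := by
  intro b m hm
  rw [coeff_gradedProj] at hm
  exact (ite_ne_right_iff.1 hm).1

theorem gradedProj_of_mem {w : B →₀ MvPolynomial σ R} (hw : w ∈ gradedPiece degB E) (E' : ℕ) :
    gradedProj degB E' w = if E' = E then w else 0 := by
  ext b m
  rw [coeff_gradedProj]
  by_cases hm : coeff m (w b) = 0
  · split_ifs <;> simp only [hm, Finsupp.zero_apply, coeff_zero]
  · rw [hw b m hm]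
    by_cases hE : E' = E
    · rw [if_pos hE, if_pos hE.symm]
    · rw [if_neg hE, if_neg (Ne.symm hE), Finsupp.zero_apply, coeff_zero]

theorem exists_eq_sum_gradedProj (degB : B → ℕ) (w : B →₀ MvPolynomial σ R) :
    ∃ s : Finset ℕ, w = ∑ E ∈ s, gradedProj degB E w := by
  classical
  refine ⟨w.support.biUnion fun b => (w b).support.image fun m => m.degree + degB b, ?_⟩
  ext b m
  rw [Finsupp.finsetSum_apply, coeff_sum]
  simp only [coeff_gradedProj, Finset.sum_ite_eq]
  refine (ite_eq_left_iff.2 fun h => Eq.symm ?_).symm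
  by_contra hm
  refine h (Finset.mem_biUnion.2 ⟨b, Finsupp.mem_support_iff.2 fun hb => hm ?_,
    Finset.mem_image.2 ⟨m, mem_support_iff.2 hm, rfl⟩⟩)
  rw [hb, coeff_zero]

/-- `T` raises the degree of every homogeneous vector by `e`. -/
def IsGradedMap (degA : A → ℕ) (degB : B → ℕ) (e : ℕ)
    (T : (A →₀ MvPolynomial σ R) →ₗ[MvPolynomial σ R] (B →₀ MvPolynomial σ R)) : Prop :=
  ∀ ⦃E w⦄, w ∈ gradedPiece degA E → T w ∈ gradedPiece degB (E + e)

namespace IsGradedMap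

variable {T T' : (A →₀ MvPolynomial σ R) →ₗ[MvPolynomial σ R] (B →₀ MvPolynomial σ R)}

theorem of_single (hT : ∀ a, T (Finsupp.single a 1) ∈ gradedPiece degB (degA a + e)) :
    IsGradedMap degA degB e T := by
  intro E w hw
  have hTw : T w = w.sum fun a p => p • T (Finsupp.single a 1) := by
    conv_lhs => rw [← Finsupp.sum_single w]
    simp only [Finsupp.sum, map_sum, ← map_smul, Finsupp.smul_single_one]
  rw [hTw]
  refine Submodule.sum_mem _ fun a ha => ?_
  have hE := le_of_mem_gradedPiece hw (Finsupp.mem_support_iff.1 ha)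
  convert smul_mem_gradedPiece (isHomogeneous_apply_of_mem_gradedPiece hw a) (hT a) using 2
  omega

theorem single_mem (hT : IsGradedMap degA degB e T) (a : A) :
    T (Finsupp.single a 1) ∈ gradedPiece degB (degA a + e) :=
  hT (single_one_mem_gradedPiece a)

theorem zero : IsGradedMap degA degB e
    (0 : (A →₀ MvPolynomial σ R) →ₗ[MvPolynomial σ R] (B →₀ MvPolynomial σ R)) :=
  fun _ _ _ => zero_mem _

theorem add (hT : IsGradedMap degA degB e T) (hT' : IsGradedMap degA degB e T') :
    IsGradedMap degA degB e (T + T') :=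
  fun _ _ hw => add_mem (hT hw) (hT' hw)

theorem sub (hT : IsGradedMap degA degB e T) (hT' : IsGradedMap degA degB e T') :
    IsGradedMap degA degB e (T - T') :=
  fun _ _ hw => sub_mem (hT hw) (hT' hw)

theorem smul {p : MvPolynomial σ R} (hp : p.IsHomogeneous e') (hT : IsGradedMap degA degB e T) :
    IsGradedMap degA degB (e + e') (p • T) :=
  fun E _ hw => (add_assoc E e e') ▸ smul_mem_gradedPiece hp (hT hw)

theorem smul_id {p : MvPolynomial σ R} (hp : p.IsHomogeneous e) :
    IsGradedMap degA degA e
      (p • (LinearMap.id : (A →₀ MvPolynomial σ R) →ₗ[MvPolynomial σ R] _)) :=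
  fun _ _ hw => smul_mem_gradedPiece hp hw

theorem comp {T₂ : (B →₀ MvPolynomial σ R) →ₗ[MvPolynomial σ R] (C →₀ MvPolynomial σ R)}
    (hT₂ : IsGradedMap degB degC e' T₂) (hT : IsGradedMap degA degB e T) :
    IsGradedMap degA degC (e + e') (T₂ ∘ₗ T) :=
  fun E _ hw => (add_assoc E e e') ▸ hT₂ (hT hw)

theorem gradedProj_apply (hT : IsGradedMap degA degB e T) (w : A →₀ MvPolynomial σ R) :
    gradedProj degB (E + e) (T w) = T (gradedProj degA E w) := by
  obtain ⟨s, hs⟩ := exists_eq_sum_gradedProj degA w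
  rw [hs]
  simp only [map_sum]
  refine Finset.sum_congr rfl fun E' _ => ?_
  have hw := gradedProj_mem_gradedPiece (degB := degA) (E := E') w
  rw [gradedProj_of_mem (hT hw), gradedProj_of_mem hw, apply_ite T, map_zero]
  exact if_congr (add_left_inj e) rfl rfl

theorem exists_comp_eq {d : (B →₀ MvPolynomial σ R) →ₗ[MvPolynomial σ R] (A →₀ MvPolynomial σ R)}
    {T : (C →₀ MvPolynomial σ R) →ₗ[MvPolynomial σ R] (A →₀ MvPolynomial σ R)}
    (hd : IsGradedMap degB degA 0 d) (hT : IsGradedMap degC degA e T)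
    (hrange : LinearMap.range T ≤ LinearMap.range d) :
    ∃ h : (C →₀ MvPolynomial σ R) →ₗ[MvPolynomial σ R] (B →₀ MvPolynomial σ R),
      IsGradedMap degC degB e h ∧ d ∘ₗ h = T := by
  choose v hv using fun c => hrange (LinearMap.mem_range_self T (Finsupp.single c 1))
  refine ⟨Finsupp.linearCombination _ fun c => gradedProj degB (degC c + e) (v c),
    .of_single fun c => ?_, Finsupp.lhom_ext' fun c => LinearMap.ext_ring ?_⟩
  · rw [Finsupp.linearCombination_single, one_smul]
    exact gradedProj_mem_gradedPiece _
  · simp only [LinearMap.comp_apply, Finsupp.lsingle_apply, Finsupp.linearCombination_single,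
      one_smul]
    rw [← hd.gradedProj_apply, hv, gradedProj_of_mem (hT.single_mem c), if_pos (add_zero _)]

end IsGradedMap

end GradedFreeModules

section Existence

theorem mem_span_image_compl_of_isUnit {R M ι : Type*} [CommRing R] [AddCommGroup M] [Module R M]
    {v : ι → M} {r : ι →₀ R} (hr : Finsupp.linearCombination R v r = 0) {c : ι}
    (hc : IsUnit (r c)) : v c ∈ Submodule.span R (v '' {c}ᶜ) := by
  rw [← Finsupp.single_add_erase c r, map_add, Finsupp.linearCombination_single] at hr
  rw [← Submodule.smul_mem_iff_of_isUnit _ hc, eq_neg_of_add_eq_zero_left hr]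
  refine neg_mem ((Finsupp.mem_span_image_iff_linearCombination R).2 ⟨r.erase c, ?_, rfl⟩)
  intro b hb
  exact fun hbc : b = c => Finsupp.mem_support_iff.1 hb (hbc ▸ Finsupp.erase_same)

variable {σ R B ι : Type*} [CommRing R] {degB : B → ℕ}
  {N : Submodule (MvPolynomial σ R) (B →₀ MvPolynomial σ R)}

/-- `N` contains the homogeneous components of its elements. -/
def IsGradedSubmodule (degB : B → ℕ) (N : Submodule (MvPolynomial σ R) (B →₀ MvPolynomial σ R)) :
    Prop :=
  ∀ ⦃w⦄, w ∈ N → ∀ E, gradedProj degB E w ∈ N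

theorem IsGradedMap.isGradedSubmodule_ker {A : Type*} {degA : A → ℕ} {e : ℕ}
    {T : (A →₀ MvPolynomial σ R) →ₗ[MvPolynomial σ R] (B →₀ MvPolynomial σ R)}
    (hT : IsGradedMap degA degB e T) : IsGradedSubmodule degA (LinearMap.ker T) := by
  intro w hw E
  rw [LinearMap.mem_ker, ← hT.gradedProj_apply, LinearMap.mem_ker.1 hw, map_zero]

theorem IsGradedSubmodule.exists_fin_span_eq [Finite σ] [IsNoetherianRing R] [Finite B]
    (hN : IsGradedSubmodule degB N) :
    ∃ (n : ℕ) (v : Fin n → B →₀ MvPolynomial σ R),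
      (∀ j, ∃ E, v j ∈ gradedPiece degB E) ∧ Submodule.span _ (Set.range v) = N := by
  set X := {w ∈ N | ∃ E, w ∈ gradedPiece degB E}
  have hX : Submodule.span (MvPolynomial σ R) X = N := by
    refine le_antisymm (Submodule.span_le.2 fun w hw => hw.1) fun w hw => ?_
    obtain ⟨s, hs⟩ := exists_eq_sum_gradedProj degB w
    rw [hs]
    exact sum_mem fun E _ => Submodule.subset_span ⟨hN hw E, E, gradedProj_mem_gradedPiece w⟩
  have hfg : (Submodule.span (MvPolynomial σ R) X).FG := IsNoetherian.noetherian _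
  obtain ⟨t, htX, ht⟩ := (Submodule.fg_span_iff_fg_span_finset_subset X).1 hfg
  refine ⟨t.card, fun j => t.equivFin.symm j, fun j => (htX (t.equivFin.symm j).2).2, ?_⟩
  rw [← hX, ht]
  exact congrArg _ ((t.equivFin.symm.surjective.range_comp Subtype.val).trans Subtype.range_coe)

theorem IsGradedSubmodule.exists_irredundant_generators [Finite σ] [IsNoetherianRing R] [Finite B]
    (hN : IsGradedSubmodule degB N) :
    ∃ (n : ℕ) (v : Fin n → B →₀ MvPolynomial σ R) (deg : Fin n → ℕ),
      (∀ j, v j ∈ gradedPiece degB (deg j)) ∧ Submodule.span _ (Set.range v) = N ∧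
        ∀ j, v j ∉ Submodule.span (MvPolynomial σ R) (v '' {j}ᶜ) := by
  classical
  obtain ⟨n, ⟨v, hv, hspan⟩, hmin⟩ : ∃ n, (∃ v : Fin n → B →₀ MvPolynomial σ R,
      (∀ j, ∃ E, v j ∈ gradedPiece degB E) ∧ Submodule.span _ (Set.range v) = N) ∧
      ∀ m < n, ¬ ∃ v : Fin m → B →₀ MvPolynomial σ R,
        (∀ j, ∃ E, v j ∈ gradedPiece degB E) ∧ Submodule.span _ (Set.range v) = N :=
    ⟨_, Nat.find_spec hN.exists_fin_span_eq, fun _ => Nat.find_min hN.exists_fin_span_eq⟩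
  choose deg hdeg using hv
  refine ⟨n, v, deg, hdeg, hspan, fun j hj => ?_⟩
  obtain ⟨m, rfl⟩ := Nat.exists_eq_succ_of_ne_zero (Fin.pos j).ne'
  refine hmin m m.lt_succ_self ⟨v ∘ j.succAbove, fun i => ⟨_, hdeg _⟩, ?_⟩
  rw [Set.range_comp, Fin.range_succAbove, ← hspan]
  refine le_antisymm (Submodule.span_mono (Set.image_subset_range _ _)) (Submodule.span_le.2 ?_)
  rintro _ ⟨i, rfl⟩
  obtain rfl | hij := eq_or_ne i j
  · exact hj
  · exact Submodule.subset_span ⟨i, hij, rfl⟩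

variable {K : Type*} [Field K]

theorem coeff_zero_eq_zero_of_mem_ker_linearCombination {deg : ι → ℕ}
    {v : ι → B →₀ MvPolynomial σ K} (hv : ∀ j, v j ∈ gradedPiece degB (deg j))
    (hmin : ∀ j, v j ∉ Submodule.span (MvPolynomial σ K) (v '' {j}ᶜ)) {w : ι →₀ MvPolynomial σ K}
    (hw : w ∈ LinearMap.ker (Finsupp.linearCombination (MvPolynomial σ K) v)) (c : ι) :
    coeff 0 (w c) = 0 := by
  have hgraded : IsGradedMap deg degB 0 (Finsupp.linearCombination (MvPolynomial σ K) v) :=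
    .of_single fun j => by simpa using hv j
  have hker := hgraded.isGradedSubmodule_ker hw (deg c)
  by_contra hne
  refine hmin c (mem_span_image_compl_of_isUnit hker ?_)
  rw [gradedProj_apply, if_pos le_rfl, Nat.sub_self, homogeneousComponent_zero]
  exact (isUnit_iff_ne_zero.2 hne).map C

/-- A stage in the construction of a minimal free resolution: a graded free module on `rank`
generators of degrees `deg`, together with the graded submodule `syz`, contained in the multiples
of the maximal ideal, to be resolved next. -/
structure SyzygyStage (K : Type*) [Field K] (σ : Type*) where
  rank : ℕ
  deg : Fin rank → ℕ
  syz : Submodule (MvPolynomial σ K) (Fin rank →₀ MvPolynomial σ K)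
  isGraded : IsGradedSubmodule deg syz
  coeff_zero : ∀ w ∈ syz, ∀ c, coeff 0 (w c) = 0

theorem SyzygyStage.exists_next [Finite σ] (s : SyzygyStage K σ) :
    ∃ (s' : SyzygyStage K σ) (d : (Fin s'.rank →₀ MvPolynomial σ K) →ₗ[MvPolynomial σ K]
      (Fin s.rank →₀ MvPolynomial σ K)),
      LinearMap.range d = s.syz ∧ s'.syz = LinearMap.ker d ∧ IsGradedMap s'.deg s.deg 0 d := by
  obtain ⟨n, v, deg, hv, hspan, hmin⟩ := s.isGraded.exists_irredundant_generators
  have hd : IsGradedMap deg s.deg 0 (Finsupp.linearCombination (MvPolynomial σ K) v) :=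
    .of_single fun j => by simpa using hv j
  exact ⟨⟨n, deg, _, hd.isGradedSubmodule_ker,
    fun w => coeff_zero_eq_zero_of_mem_ker_linearCombination hv hmin⟩, _,
    (Finsupp.range_linearCombination _).trans hspan, rfl, hd⟩

/-- The stage `F₀ = S` with the ideal `I` to be resolved. -/
noncomputable def SyzygyStage.ofIdeal {I : Ideal (MvPolynomial σ K)}
    (hI : ∀ p ∈ I, ∀ E, homogeneousComponent E p ∈ I) (hI₀ : ∀ p ∈ I, coeff 0 p = 0) :
    SyzygyStage K σ where
  rank := 1
  deg _ := 0
  syz := Submodule.comap (Finsupp.lapply 0) I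
  isGraded w hw E := by
    rw [Submodule.mem_comap, Finsupp.lapply_apply, gradedProj_apply]
    exact hI _ hw E
  coeff_zero w hw c := by
    rw [Subsingleton.elim c 0]
    exact hI₀ _ hw

theorem nonempty_minGradedFreeRes [Finite σ] {I : Ideal (MvPolynomial σ K)}
    (hI : ∀ p ∈ I, ∀ E, homogeneousComponent E p ∈ I) (hI₀ : ∀ p ∈ I, coeff 0 p = 0) :
    Nonempty (MinGradedFreeRes K σ I) := by
  choose next d hrange hker hgraded using SyzygyStage.exists_next (K := K) (σ := σ)
  let stage (i : ℕ) : SyzygyStage K σ := Nat.rec (.ofIdeal hI hI₀) (fun _ => next) i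
  have hε (b : Fin 1) : (Finsupp.lapply (R := MvPolynomial σ K) (0 : Fin 1)
      (Finsupp.single b (1 : MvPolynomial σ K))).IsHomogeneous 0 := by
    rw [Subsingleton.elim b 0, Finsupp.lapply_apply, Finsupp.single_eq_same]
    exact isHomogeneous_one σ K
  have hsurj (s : MvPolynomial σ K) : ∃ t : Fin 1 →₀ MvPolynomial σ K,
      Finsupp.lapply (R := MvPolynomial σ K) (0 : Fin 1) t - s ∈ I :=
    ⟨Finsupp.single 0 s, by simp⟩
  exact ⟨{
    B := fun i => Fin (stage i).rank
    finB := fun i => inferInstance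
    deg := fun i => (stage i).deg
    d := fun i => d (stage i)
    ε := Finsupp.lapply (0 : Fin 1)
    ε_homog := hε
    surj := hsurj
    exact0 := hrange (stage 0)
    exact := fun i => (hrange (stage (i + 1))).trans (hker (stage i))
    homog := fun i b c m hm => (hgraded (stage i)).single_mem b c m (mem_support_iff.1 hm)
    minimal := fun i b c => (stage i).coeff_zero _
      (hrange (stage i) ▸ LinearMap.mem_range_self _ _) c }⟩

end Existence

section GradedNullHomotopies

variable {σ R : Type*} [CommRing R] {B : ℕ → Type*} {deg : ∀ i, B i → ℕ}
  {d : ∀ i, (B (i + 1) →₀ MvPolynomial σ R) →ₗ[MvPolynomial σ R] (B i →₀ MvPolynomial σ R)}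
  {e e' : ℕ} {g g' p : MvPolynomial σ R}

theorem IsGradedMap.exists_homotopy_extension {A B C : Type*} {degA : A → ℕ} {degB : B → ℕ}
    {degC : C → ℕ}
    {dB : (B →₀ MvPolynomial σ R) →ₗ[MvPolynomial σ R] (A →₀ MvPolynomial σ R)}
    {dC : (C →₀ MvPolynomial σ R) →ₗ[MvPolynomial σ R] (B →₀ MvPolynomial σ R)}
    {h : (A →₀ MvPolynomial σ R) →ₗ[MvPolynomial σ R] (B →₀ MvPolynomial σ R)}
    (hdB : IsGradedMap degB degA 0 dB) (hdC : IsGradedMap degC degB 0 dC)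
    (hexact : LinearMap.range dC = LinearMap.ker dB) (hg : g.IsHomogeneous e)
    (hh : IsGradedMap degA degB e h) (hdh : dB ∘ₗ h ∘ₗ dB = g • dB) :
    ∃ h' : (B →₀ MvPolynomial σ R) →ₗ[MvPolynomial σ R] (C →₀ MvPolynomial σ R),
      IsGradedMap degB degC e h' ∧ dC ∘ₗ h' + h ∘ₗ dB = g • LinearMap.id := by
  have hhd : IsGradedMap degB degB e (h ∘ₗ dB) := by simpa only [zero_add] using hh.comp hdB
  obtain ⟨h', hh', hdh'⟩ := hdC.exists_comp_eq ((IsGradedMap.smul_id hg).sub hhd) (by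
    rintro _ ⟨w, rfl⟩
    rw [hexact, LinearMap.mem_ker, LinearMap.sub_apply, map_sub]
    exact sub_eq_zero.2 ((map_smul dB g w).trans (LinearMap.congr_fun hdh w).symm))
  refine ⟨h', hh', LinearMap.ext fun w => ?_⟩
  rw [LinearMap.add_apply, hdh', LinearMap.sub_apply, sub_add_cancel]

/-- Multiplication by `g` on the complex `(B • →₀ MvPolynomial σ R, d)` of graded free modules is
null-homotopic through maps raising degrees by `e`. -/
def IsGradedNullHomotopic (deg : ∀ i, B i → ℕ)
    (d : ∀ i, (B (i + 1) →₀ MvPolynomial σ R) →ₗ[MvPolynomial σ R] (B i →₀ MvPolynomial σ R))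
    (e : ℕ) (g : MvPolynomial σ R) : Prop :=
  ∃ H, (∀ i, IsGradedMap (deg i) (deg (i + 1)) e (H i)) ∧ IsNullHomotopy d g H

namespace IsGradedNullHomotopic

theorem zero : IsGradedNullHomotopic deg d e 0 :=
  ⟨fun _ => 0, fun _ => .zero, by simp, by simp⟩

theorem add (hg : IsGradedNullHomotopic deg d e g) (hg' : IsGradedNullHomotopic deg d e g') :
    IsGradedNullHomotopic deg d e (g + g') := by
  obtain ⟨H, hH, hHg⟩ := hg
  obtain ⟨H', hH', hHg'⟩ := hg'
  refine ⟨fun i => H i + H' i, fun i => (hH i).add (hH' i), ?_, fun i => ?_⟩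
  · rw [LinearMap.comp_add, hHg.zero, hHg'.zero, add_smul]
  · rw [LinearMap.comp_add, LinearMap.add_comp, add_add_add_comm, hHg.succ, hHg'.succ, add_smul]

theorem mul (hp : p.IsHomogeneous e') (hg : IsGradedNullHomotopic deg d e g) :
    IsGradedNullHomotopic deg d (e + e') (p * g) := by
  obtain ⟨H, hH, hHg⟩ := hg
  refine ⟨fun i => p • H i, fun i => (hH i).smul hp, ?_, fun i => ?_⟩
  · rw [LinearMap.comp_smul, hHg.zero, mul_smul]
  · rw [LinearMap.comp_smul, LinearMap.smul_comp, ← smul_add, hHg.succ, mul_smul]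

theorem of_exact (hd : ∀ i, IsGradedMap (deg (i + 1)) (deg i) 0 (d i))
    (hexact : ∀ i, LinearMap.range (d (i + 1)) = LinearMap.ker (d i)) (hg : g.IsHomogeneous e)
    (hrange : ∀ w, g • w ∈ LinearMap.range (d 0)) : IsGradedNullHomotopic deg d e g := by
  let IsPartial (i : ℕ) (h : (B i →₀ MvPolynomial σ R) →ₗ[MvPolynomial σ R]
      (B (i + 1) →₀ MvPolynomial σ R)) : Prop :=
    IsGradedMap (deg i) (deg (i + 1)) e h ∧ d i ∘ₗ h ∘ₗ d i = g • d i
  obtain ⟨h₀, hh₀, hdh₀⟩ := (hd 0).exists_comp_eq (.smul_id hg)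
    (by rintro _ ⟨w, rfl⟩; exact hrange w)
  have hpartial₀ : IsPartial 0 h₀ :=
    ⟨hh₀, by rw [← LinearMap.comp_assoc, hdh₀, LinearMap.smul_comp, LinearMap.id_comp]⟩
  have hstep (i : ℕ) (h : {h // IsPartial i h}) : ∃ h' : {h' // IsPartial (i + 1) h'},
      d (i + 1) ∘ₗ h'.1 + h.1 ∘ₗ d i = g • LinearMap.id := by
    obtain ⟨h', hh', hdh'⟩ :=
      (hd i).exists_homotopy_extension (hd (i + 1)) (hexact i) hg h.2.1 h.2.2
    have hdd : d i ∘ₗ d (i + 1) = 0 := LinearMap.range_le_ker_iff.1 (hexact i).le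
    have hcomp := congrArg (· ∘ₗ d (i + 1)) hdh'
    simp only [LinearMap.add_comp, LinearMap.comp_assoc, hdd, LinearMap.comp_zero, add_zero,
      LinearMap.smul_comp, LinearMap.id_comp] at hcomp
    exact ⟨⟨h', hh', hcomp⟩, hdh'⟩
  choose next hnext using hstep
  let H (i : ℕ) : {h // IsPartial i h} := Nat.rec ⟨h₀, hpartial₀⟩ next i
  exact ⟨fun i => (H i).1, fun i => (H i).2.1, hdh₀, fun i => hnext i (H i)⟩

end IsGradedNullHomotopic

namespace MinGradedFreeRes

variable {K : Type*} [Field K] {I : Ideal (MvPolynomial σ K)} (F : MinGradedFreeRes K σ I)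

theorem isGradedMap_d (i : ℕ) : IsGradedMap (F.deg (i + 1)) (F.deg i) 0 (F.d i) :=
  .of_single fun b c m hm => F.homog i b c m (mem_support_iff.2 hm)

theorem isGradedNullHomotopic_of_mem {g : MvPolynomial σ K} (hgI : g ∈ I)
    (hg : g.IsHomogeneous e) : IsGradedNullHomotopic F.deg F.d e g := by
  refine .of_exact F.isGradedMap_d F.exact hg fun w => ?_
  rw [F.exact0, Submodule.mem_comap, map_smul]
  exact I.mul_mem_right _ hgI

end MinGradedFreeRes

end GradedNullHomotopies

section BaseChange

variable {R R' M M' A B C : Type*} [CommRing R] [CommRing R'] {f : R →+* R'}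

/-- The entrywise action of a ring homomorphism on vectors. -/
noncomputable def mapCoeffs (f : R →+* R') : (A →₀ R) →ₛₗ[f] (A →₀ R') :=
  Finsupp.mapRange.linearMap f.toSemilinearMap

theorem mapCoeffs_apply (w : A →₀ R) (a : A) : mapCoeffs f w a = f (w a) :=
  rfl

variable [AddCommGroup M] [Module R M] [AddCommGroup M'] [Module R' M']

/-- The base change to `R'` of a linear map on a free `R`-module, whose values are transported
along a semilinear map `φ`. -/
noncomputable def extendScalars (φ : M →ₛₗ[f] M') (T : (A →₀ R) →ₗ[R] M) : (A →₀ R') →ₗ[R'] M' :=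
  Finsupp.linearCombination R' fun a => φ (T (Finsupp.single a 1))

theorem extendScalars_single_one (φ : M →ₛₗ[f] M') (T : (A →₀ R) →ₗ[R] M) (a : A) :
    extendScalars φ T (Finsupp.single a 1) = φ (T (Finsupp.single a 1)) := by
  rw [extendScalars, Finsupp.linearCombination_single, one_smul]

theorem extendScalars_mapCoeffs (φ : M →ₛₗ[f] M') (T : (A →₀ R) →ₗ[R] M) (w : A →₀ R) :
    extendScalars φ T (mapCoeffs f w) = φ (T w) := by
  induction w using Finsupp.induction_linear with
  | zero => simp only [map_zero]
  | add w w' hw hw' => simp only [map_add, hw, hw']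
  | single a r =>
    have hsingle : mapCoeffs f (Finsupp.single a r) = Finsupp.single a (f r) :=
      Finsupp.mapRange_single (hf := map_zero f)
    rw [hsingle, extendScalars, Finsupp.linearCombination_single, ← map_smulₛₗ, ← map_smul,
      Finsupp.smul_single_one]

theorem extendScalars_comp (φ : M →ₛₗ[f] M') (U : (B →₀ R) →ₗ[R] M)
    (T : (A →₀ R) →ₗ[R] (B →₀ R)) :
    extendScalars φ (U ∘ₗ T) = extendScalars φ U ∘ₗ extendScalars (mapCoeffs f) T :=
  Finsupp.lhom_ext' fun a => LinearMap.ext_ring <| by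
    simp only [LinearMap.comp_apply, Finsupp.lsingle_apply, extendScalars_single_one,
      extendScalars_mapCoeffs]

theorem extendScalars_add (φ : M →ₛₗ[f] M') (T T' : (A →₀ R) →ₗ[R] M) :
    extendScalars φ (T + T') = extendScalars φ T + extendScalars φ T' :=
  Finsupp.lhom_ext' fun a => LinearMap.ext_ring <| by
    simp only [LinearMap.comp_apply, Finsupp.lsingle_apply, extendScalars_single_one,
      LinearMap.add_apply, map_add]

theorem extendScalars_smul_id (r : R) :
    extendScalars (mapCoeffs f) (r • LinearMap.id : (A →₀ R) →ₗ[R] (A →₀ R)) =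
      f r • LinearMap.id :=
  Finsupp.lhom_ext' fun a => LinearMap.ext_ring <| by
    ext b
    classical
    simp [extendScalars_single_one, mapCoeffs_apply, Finsupp.single_apply, apply_ite f]

theorem extendScalars_zero (φ : M →ₛₗ[f] M') :
    extendScalars φ (0 : (A →₀ R) →ₗ[R] M) = 0 :=
  Finsupp.lhom_ext' fun a => LinearMap.ext_ring <| by
    simp only [LinearMap.comp_apply, Finsupp.lsingle_apply, extendScalars_single_one,
      LinearMap.zero_apply, map_zero]

theorem extendScalars_mem {φ : M →ₛₗ[f] M'} {T : (A →₀ R) →ₗ[R] M} {J : Submodule R' M'}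
    (h : ∀ w, φ (T w) ∈ J) (y : A →₀ R') : extendScalars φ T y ∈ J := by
  rw [extendScalars, Finsupp.linearCombination_apply]
  exact sum_mem fun a _ => J.smul_mem _ (h _)

theorem IsNullHomotopy.extendScalars {B : ℕ → Type*}
    {d : ∀ i, (B (i + 1) →₀ R) →ₗ[R] (B i →₀ R)} {g : R}
    {H : ∀ i, (B i →₀ R) →ₗ[R] (B (i + 1) →₀ R)} (hH : IsNullHomotopy d g H) (f : R →+* R') :
    IsNullHomotopy (fun i => extendScalars (mapCoeffs f) (d i)) (f g)
      fun i => extendScalars (mapCoeffs f) (H i) where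
  zero := by rw [← extendScalars_comp, hH.zero, extendScalars_smul_id]
  succ i := by
    rw [← extendScalars_comp, ← extendScalars_comp, ← extendScalars_add, hH.succ,
      extendScalars_smul_id]

end BaseChange

section GradedBaseChange

variable {σ P R k A B : Type*} [CommRing R] [CommRing k] {degA : A → ℕ} {degB : B → ℕ} {e E : ℕ}
  {f : MvPolynomial σ R →+* MvPolynomial P k}

theorem mapCoeffs_mem_gradedPiece (hf : ∀ p a, p.IsHomogeneous a → (f p).IsHomogeneous a)
    {w : B →₀ MvPolynomial σ R} (hw : w ∈ gradedPiece degB E) :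
    mapCoeffs f w ∈ gradedPiece degB E := by
  intro b m hm
  rw [mapCoeffs_apply] at hm
  have hwb : w b ≠ 0 := fun h => hm (by rw [h, map_zero, coeff_zero])
  have hdeg : Finsupp.weight 1 m = E - degB b :=
    hf _ _ (isHomogeneous_apply_of_mem_gradedPiece hw b) hm
  rw [Finsupp.degree_eq_weight_one, ← Nat.sub_add_cancel (le_of_mem_gradedPiece hw hwb), ← hdeg]
  rfl

theorem IsGradedMap.extendScalars (hf : ∀ p a, p.IsHomogeneous a → (f p).IsHomogeneous a)
    {T : (A →₀ MvPolynomial σ R) →ₗ[MvPolynomial σ R] (B →₀ MvPolynomial σ R)}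
    (hT : IsGradedMap degA degB e T) :
    IsGradedMap degA degB e (extendScalars (mapCoeffs f) T) :=
  .of_single fun a => by
    rw [extendScalars_single_one]
    exact mapCoeffs_mem_gradedPiece hf (hT.single_mem a)

theorem IsGradedNullHomotopic.extendScalars
    (hf : ∀ p a, p.IsHomogeneous a → (f p).IsHomogeneous a)
    {B : ℕ → Type*} {deg : ∀ i, B i → ℕ}
    {d : ∀ i, (B (i + 1) →₀ MvPolynomial σ R) →ₗ[MvPolynomial σ R] (B i →₀ MvPolynomial σ R)}
    {g : MvPolynomial σ R} (hg : IsGradedNullHomotopic deg d e g) :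
    IsGradedNullHomotopic deg (fun i => extendScalars (mapCoeffs f) (d i)) e (f g) :=
  let ⟨_, hH, hHg⟩ := hg
  ⟨_, fun i => (hH i).extendScalars hf, hHg.extendScalars f⟩

theorem homogeneousComponent_map_of_isHomogeneous
    (hf : ∀ p a, p.IsHomogeneous a → (f p).IsHomogeneous a) (p : MvPolynomial σ R) :
    homogeneousComponent e (f p) = f (homogeneousComponent e p) := by
  induction p using MvPolynomial.induction_on' with
  | monomial m c =>
    have hm : (monomial m c).IsHomogeneous m.degree := isHomogeneous_monomial c rfl
    rw [homogeneousComponent_of_mem (hf _ _ hm), homogeneousComponent_of_mem hm, apply_ite f,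
      map_zero]
  | add p q hp hq => simp only [map_add, hp, hq]

theorem MinGradedFreeRes.isGradedNullHomotopic_of_mem_map {K : Type*} [Field K]
    {I : Ideal (MvPolynomial σ K)} (F : MinGradedFreeRes K σ I)
    (hI : ∀ p ∈ I, ∀ a, homogeneousComponent a p ∈ I) {f : MvPolynomial σ K →+* MvPolynomial P k}
    (hf : ∀ p a, p.IsHomogeneous a → (f p).IsHomogeneous a) {x : MvPolynomial P k}
    (hx : x ∈ Ideal.map f I) (e : ℕ) :
    IsGradedNullHomotopic F.deg (fun i => _root_.extendScalars (mapCoeffs f) (F.d i)) e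
      (homogeneousComponent e x) := by
  induction hx using Submodule.span_induction generalizing e with
  | mem _ h =>
    obtain ⟨g, hg, rfl⟩ := h
    rw [homogeneousComponent_map_of_isHomogeneous hf]
    exact (F.isGradedNullHomotopic_of_mem (hI g hg e)
      (homogeneousComponent_isHomogeneous e g)).extendScalars hf
  | zero =>
    rw [map_zero]
    exact .zero
  | add x y _ _ hx hy =>
    rw [map_add]
    exact (hx e).add (hy e)
  | smul r x _ hx =>
    rw [smul_eq_mul, ← sum_homogeneousComponent x, Finset.mul_sum, map_sum]
    refine Finset.sum_induction _ _ (fun _ _ => .add) .zero fun a _ => ?_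
    rw [homogeneousComponent_mul_of_isHomogeneous (homogeneousComponent_isHomogeneous a x)]
    split_ifs with ha
    · simpa only [Nat.add_sub_cancel' ha] using
        (hx a).mul (homogeneousComponent_isHomogeneous (e - a) r)
    · exact .zero

end GradedBaseChange

section RegularityBound

variable {P R A B : Type*} [CommRing R] {degA : A → ℕ} {degB : B → ℕ} {e E : ℕ}

/-- The vectors of order at least `E` in a graded free module: homogeneous components of degree
less than `E` vanish. -/
def orderFiltration (degB : B → ℕ) (E : ℕ) : Set (B →₀ MvPolynomial P R) :=
  {w | ∀ b, w b ∈ idealOfVars P R ^ (E - degB b)}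

theorem mem_idealOfVars_pow_of_isHomogeneous {p : MvPolynomial P R} {a : ℕ}
    (hp : p.IsHomogeneous a) : p ∈ idealOfVars P R ^ a := by
  rw [mem_pow_idealOfVars_iff]
  intro m hm
  rw [Finsupp.degree_eq_weight_one]
  exact (hp (mem_support_iff.1 hm)).ge

theorem IsGradedMap.mapsTo_orderFiltration
    {T : (A →₀ MvPolynomial P R) →ₗ[MvPolynomial P R] (B →₀ MvPolynomial P R)}
    (hT : IsGradedMap degA degB e T) :
    Set.MapsTo T (orderFiltration degA E) (orderFiltration degB (E + e)) := by
  intro w hw b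
  rw [← Finsupp.sum_single w, Finsupp.sum, map_sum, Finsupp.finsetSum_apply]
  refine sum_mem fun a _ => ?_
  rw [← mul_one (w a), ← smul_eq_mul, ← Finsupp.smul_single, map_smul, Finsupp.smul_apply,
    smul_eq_mul]
  have hTa := mem_idealOfVars_pow_of_isHomogeneous
    (isHomogeneous_apply_of_mem_gradedPiece (hT.single_mem a) b)
  have hmul := Ideal.mul_mem_mul (hw a) hTa
  rw [← pow_add] at hmul
  exact Ideal.pow_le_pow_right (by omega) hmul

theorem smul_mem_span_X_pow_smul_top [Fintype P] {N r : ℕ}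
    (hdeg : ∀ b, degB b < Fintype.card P + r) {u : MvPolynomial P R}
    (hu : u ∈ idealOfVars P R ^ r) {c : B →₀ MvPolynomial P R}
    (hc : c ∈ orderFiltration degB ((N + 1) * Fintype.card P)) :
    u • c ∈ Ideal.span (Set.range fun p : P => (X p : MvPolynomial P R) ^ (N + 1)) •
      (⊤ : Submodule (MvPolynomial P R) (B →₀ MvPolynomial P R)) := by
  rw [mem_ideal_smul_top_finsupp_iff]
  intro b
  have huc := Ideal.mul_mem_mul hu (hc b)
  rw [← pow_add] at huc
  refine idealOfVars_pow_le_span_X_pow ?_ huc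
  have := hdeg b
  rw [add_mul, one_mul, mul_comm N]
  omega

namespace MinGradedFreeRes

variable {K σ k : Type*} [Field K] [CommRing k] {I : Ideal (MvPolynomial σ K)}

theorem d_comp_d (F : MinGradedFreeRes K σ I) (i : ℕ) : F.d i ∘ₗ F.d (i + 1) = 0 :=
  LinearMap.range_le_ker_iff.1 (F.exact i).le

theorem mem_map_of_smul_mem_range {S : Type*} [CommRing S] (F : MinGradedFreeRes K σ I)
    {f : MvPolynomial σ K →+* S} {t : F.B 0 →₀ MvPolynomial σ K} (ht : F.ε t - 1 ∈ I) {u : S}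
    (hu : u • mapCoeffs f t ∈ LinearMap.range (extendScalars (mapCoeffs f) (F.d 0))) :
    u ∈ Ideal.map f I := by
  obtain ⟨y, hy⟩ := hu
  have hd (w) : f.toSemilinearMap ((F.ε ∘ₗ F.d 0) w) ∈ Ideal.map f I := by
    refine Ideal.mem_map_of_mem f ?_
    have : F.d 0 w ∈ Submodule.comap F.ε I := F.exact0 ▸ LinearMap.mem_range_self _ w
    exact this
  have huε : u * f (F.ε t) ∈ Ideal.map f I := by
    have h := extendScalars_mem hd y
    rwa [extendScalars_comp, LinearMap.comp_apply, hy, map_smul, extendScalars_mapCoeffs] at h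
  have hut := Ideal.mul_mem_left _ u (Ideal.mem_map_of_mem f ht)
  rw [map_sub, map_one, mul_sub, mul_one] at hut
  exact (Submodule.sub_mem_iff_right _ huε).1 hut

theorem idealOfVars_pow_le_map [Fintype P] (F : MinGradedFreeRes K σ I)
    (hI : ∀ p ∈ I, ∀ a, homogeneousComponent a p ∈ I) {f : MvPolynomial σ K →+* MvPolynomial P k}
    (hf : ∀ p a, p.IsHomogeneous a → (f p).IsHomogeneous a)
    (hrad : idealOfVars P k ≤ (Ideal.map f I).radical) {r : ℕ}
    (hdeg : ∀ b : F.B (Fintype.card P), F.deg _ b < Fintype.card P + r) :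
    idealOfVars P k ^ r ≤ Ideal.map f I := by
  intro u hu
  obtain ⟨N, hN⟩ := Ideal.exists_pow_le_of_le_radical_of_fg hrad (idealOfVars_fg P k)
  have hX (p : P) : IsGradedNullHomotopic F.deg (fun i => extendScalars (mapCoeffs f) (F.d i))
      (N + 1) (X p ^ (N + 1)) := by
    have hXmem : (X p ^ (N + 1) : MvPolynomial P k) ∈ Ideal.map f I :=
      hN (Ideal.pow_le_pow_right N.le_succ
        (Ideal.pow_mem_pow (Ideal.subset_span (Set.mem_range_self p)) _))
    simpa only [homogeneousComponent_eq_self (isHomogeneous_X_pow p (N + 1))] using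
      F.isGradedNullHomotopic_of_mem_map hI hf hXmem (N + 1)
  choose H hH hHX using hX
  obtain ⟨t, ht⟩ := F.surj 1
  refine F.mem_map_of_smul_mem_range ht
    (smul_mem_range_of_forall_mem_smul_top (fun i => ?_) hHX
      (fun T p hp i => isSMulRegular_X_pow_quotient hp (F.B i))
      (fun i => orderFiltration (F.deg i) ((N + 1) * i))
      (fun p i => (hH p i).mapsTo_orderFiltration) (fun b => ?_)
      fun c => smul_mem_span_X_pow_smul_top hdeg hu)
  · rw [← extendScalars_comp, F.d_comp_d, extendScalars_zero]
  · rw [mul_zero, Nat.zero_sub, pow_zero, Ideal.one_eq_top]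
    trivial

end MinGradedFreeRes

end RegularityBound

section OffDiagonalProducts

variable {A P : Type*} [CommRing A] [Fintype P] {x : P → A} {t θ : A}

theorem mul_mul_eq_sq_of_offDiag (hP : 2 < Fintype.card P) (hx : ∀ i j, i ≠ j → x i * x j = t)
    (i l : P) : x i * x l * t = t ^ 2 := by
  have third (i l : P) : ∃ j, j ≠ i ∧ j ≠ l :=
    ENat.exists_ne_ne_of_three_le (by rw [ENat.card_eq_coe_fintype_card]; exact_mod_cast hP) i l
  obtain rfl | hil := eq_or_ne i l
  · obtain ⟨j, hji, -⟩ := third i i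
    obtain ⟨l, hli, hlj⟩ := third i j
    calc x i * x i * t = x i * x j * (x i * x l) := by rw [← hx j l hlj.symm]; ring
      _ = t ^ 2 := by rw [hx i j hji.symm, hx i l hli.symm, sq]
  · rw [hx i l hil, sq]

theorem sq_eq_zero_of_offDiag (hP : 2 < Fintype.card P) (hx : ∀ i j, i ≠ j → x i * x j = t)
    (ht : t = θ * (∑ l, x l) ^ 2) (hθ : IsUnit (1 - θ * Fintype.card P ^ 2)) : t ^ 2 = 0 := by
  have hsum : (∑ i, x i) ^ 2 * t = Fintype.card P ^ 2 * t ^ 2 := by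
    rw [sq (∑ i, x i), Finset.sum_mul_sum]
    simp only [Finset.sum_mul, mul_mul_eq_sq_of_offDiag hP hx, Finset.sum_const,
      Finset.card_univ, nsmul_eq_mul]
    ring
  refine hθ.mul_right_eq_zero.1 ?_
  linear_combination θ * hsum + t * ht

theorem pow_four_eq_zero_of_offDiag (hP : 2 < Fintype.card P)
    (hx : ∀ i j, i ≠ j → x i * x j = t) (ht : t = θ * (∑ l, x l) ^ 2) (hθ : IsUnit θ)
    (hθ' : IsUnit (1 - θ * Fintype.card P ^ 2)) (p : P) : x p ^ 4 = 0 := by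
  classical
  have ht2 := sq_eq_zero_of_offDiag hP hx ht hθ'
  have hpt := (mul_mul_eq_sq_of_offDiag hP hx p p).trans ht2
  have hsp : (∑ l, x l) * x p = x p ^ 2 + (Fintype.card P - 1 : ℕ) * t := by
    rw [Finset.sum_mul, ← Finset.add_sum_erase _ _ (Finset.mem_univ p), sq,
      Finset.sum_congr rfl fun l hl => hx l p (Finset.ne_of_mem_erase hl), Finset.sum_const,
      Finset.card_erase_of_mem (Finset.mem_univ p), Finset.card_univ, nsmul_eq_mul]
  have hsp2 : ((∑ l, x l) * x p) ^ 2 = 0 :=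
    hθ.mul_right_eq_zero.1 (by linear_combination hpt - x p * x p * ht)
  rw [hsp] at hsp2
  linear_combination hsp2 - 2 * ((Fintype.card P - 1 : ℕ) : A) * hpt -
    ((Fintype.card P - 1 : ℕ) : A) ^ 2 * ht2

end OffDiagonalProducts

section OffDiagonalIdeal

variable {k P : Type*} [Field k] [Fintype P] {θ : k}

/-- The ideal of `k[X_p : p ∈ P]` modulo which every product of two distinct variables equals
`θ (∑ X_l)²`; the image of the join-meet ideal under a specialization of the variables. -/
noncomputable def offDiagIdeal (P : Type*) [Fintype P] (θ : k) : Ideal (MvPolynomial P k) :=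
  Ideal.span {q | ∃ i j : P, i ≠ j ∧ q = X i * X j - C θ * (∑ l, X l) ^ 2}

theorem idealOfVars_le_radical_offDiagIdeal (hP : 2 < Fintype.card P) (hθ : θ ≠ 0)
    (hθ' : 1 - θ * Fintype.card P ^ 2 ≠ 0) : idealOfVars P k ≤ (offDiagIdeal P θ).radical := by
  rw [Ideal.span_le]
  rintro _ ⟨p, rfl⟩
  refine ⟨4, Ideal.Quotient.eq_zero_iff_mem.1 ?_⟩
  set π := Ideal.Quotient.mk (offDiagIdeal P θ)
  rw [map_pow]
  refine pow_four_eq_zero_of_offDiag (x := fun p => π (X p)) (θ := π (C θ)) hP (fun i j hij => ?_)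
    rfl ((hθ.isUnit.map C).map π) ?_ p
  · rw [← map_sum, ← map_pow, ← map_mul, ← map_mul]
    exact Ideal.Quotient.eq.2 (Ideal.subset_span ⟨i, j, hij, rfl⟩)
  · simpa using (hθ'.isUnit.map C).map π

theorem isHomogeneous_offDiag (i j : P) :
    (X i * X j - C θ * (∑ l, X l) ^ 2 : MvPolynomial P k).IsHomogeneous 2 := by
  have hsum : (∑ l, X l : MvPolynomial P k).IsHomogeneous 1 :=
    .sum _ _ _ fun l _ => isHomogeneous_X k l
  exact ((isHomogeneous_X k i).mul (isHomogeneous_X k j)).sub ((hsum.pow 2).C_mul θ)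

-- In degree three the ideal has codimension one, and this functional cuts it out.
theorem eval_homogeneousComponent_three_of_mem_offDiagIdeal [DecidableEq P]
    {f : MvPolynomial P k} (hf : f ∈ offDiagIdeal P θ) :
    θ * eval 1 (homogeneousComponent 3 f) + (1 - θ * Fintype.card P ^ 2) *
      ∑ l, eval (Pi.single l 1) (homogeneousComponent 3 f) = 0 := by
  induction hf using Submodule.closure_induction with
  | zero => simp
  | add f g _ _ hf hg =>
    simp only [map_add, Finset.sum_add_distrib]
    linear_combination hf + hg
  | smul_mem r q hq =>
    obtain ⟨i, j, hij, rfl⟩ := hq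
    rw [smul_eq_mul, homogeneousComponent_mul_of_isHomogeneous (isHomogeneous_offDiag i j),
      if_pos (by norm_num)]
    have hdiag (l : P) : (Pi.single l 1 : P → k) i * (Pi.single l 1 : P → k) j = 0 := by
      obtain rfl | hil := eq_or_ne i l
      · rw [Pi.single_eq_of_ne hij.symm, mul_zero]
      · rw [Pi.single_eq_of_ne hil, zero_mul]
    have hlinear := eval_one_eq_sum_eval_single_of_isHomogeneous_one
      (homogeneousComponent_isHomogeneous 1 r)
    simp only [Nat.reduceSub, map_mul, map_sub, map_pow, map_sum, eval_X, eval_C, hlinear, hdiag,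
      Pi.one_apply, mul_one, one_pow, Finset.sum_const, Finset.card_univ, nsmul_eq_mul,
      Finset.sum_pi_single', Finset.mem_univ, ↓reduceIte, zero_sub, mul_neg,
      Finset.sum_neg_distrib, ← Finset.sum_mul]
    ring

theorem not_idealOfVars_pow_three_le_offDiagIdeal (hP : 1 < Fintype.card P) (hθ : θ ≠ 0) :
    ¬ idealOfVars P k ^ 3 ≤ offDiagIdeal P θ := by
  classical
  intro hle
  obtain ⟨a, b, hab⟩ := Fintype.exists_pair_of_one_lt_card hP
  have hcubic : (X a * X b * X b : MvPolynomial P k).IsHomogeneous 3 :=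
    ((isHomogeneous_X k a).mul (isHomogeneous_X k b)).mul (isHomogeneous_X k b)
  have hmem : (X a * X b * X b : MvPolynomial P k) ∈ idealOfVars P k ^ 3 := by
    rw [pow_succ, sq]
    exact Ideal.mul_mem_mul (Ideal.mul_mem_mul (Ideal.subset_span ⟨a, rfl⟩)
      (Ideal.subset_span ⟨b, rfl⟩)) (Ideal.subset_span ⟨b, rfl⟩)
  have := eval_homogeneousComponent_three_of_mem_offDiagIdeal (hle hmem)
  simp [homogeneousComponent_eq_self hcubic, hab, hθ, Pi.single_apply] at this

theorem exists_ne_zero_one_sub_mul_ne_zero [Infinite k] (c : k) :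
    ∃ θ : k, θ ≠ 0 ∧ 1 - θ * c ≠ 0 := by
  classical
  obtain ⟨θ, hθ⟩ := Infinite.exists_notMem_finset {0, c⁻¹}
  simp only [Finset.mem_insert, Finset.mem_singleton, not_or] at hθ
  exact ⟨θ, hθ.1, fun h => hθ.2 (eq_inv_of_mul_eq_one_left (sub_eq_zero.1 h).symm)⟩

end OffDiagonalIdeal

section JoinMeetIdeal

variable {K L : Type*} [Field K] [Lattice L]

theorem isHomogeneous_joinMeet (a b : L) :
    (X a * X b - X (a ⊓ b) * X (a ⊔ b) : MvPolynomial L K).IsHomogeneous 2 :=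
  ((isHomogeneous_X K a).mul (isHomogeneous_X K b)).sub
    ((isHomogeneous_X K (a ⊓ b)).mul (isHomogeneous_X K (a ⊔ b)))

theorem homogeneousComponent_mem_joinMeetIdeal {p : MvPolynomial L K}
    (hp : p ∈ joinMeetIdeal K L) (E : ℕ) : homogeneousComponent E p ∈ joinMeetIdeal K L := by
  let := gradedAlgebra (σ := L) (R := K)
  have hI : (joinMeetIdeal K L).IsHomogeneous (homogeneousSubmodule L K) := by
    refine Ideal.homogeneous_span _ _ ?_
    rintro _ ⟨a, b, -, -, rfl⟩
    exact ⟨2, isHomogeneous_joinMeet a b⟩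
  simpa only [← decomposition.decompose'_apply] using! hI E hp

theorem coeff_zero_eq_zero_of_mem_joinMeetIdeal {p : MvPolynomial L K}
    (hp : p ∈ joinMeetIdeal K L) : coeff 0 p = 0 := by
  have hle : joinMeetIdeal K L ≤ RingHom.ker (constantCoeff : MvPolynomial L K →+* K) := by
    refine Ideal.span_le.2 ?_
    rintro _ ⟨a, b, -, -, rfl⟩
    simp [RingHom.mem_ker]
  exact hle hp

end JoinMeetIdeal

section IntervalSpecialization

variable {K k L : Type*} [Field K] [Field k] [Algebra K k] [Lattice L] {u v : L}
  [Fintype (Set.Ioo u v)] {θ : k}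

open Classical in
/-- The specialization of the variables of `K[L]` to `k[X_l : u < l < v]` along an interval
`[u, v]`: with `s = ∑ X_l`, it sends `x_u` to `θ s`, `x_v` to `s`, each interior variable to itself
and every variable outside `[u, v]` to `0`. -/
noncomputable def intervalSpecialization (K : Type*) [Field K] [Algebra K k] (u v : L)
    [Fintype (Set.Ioo u v)] (θ : k) : MvPolynomial L K →+* MvPolynomial (Set.Ioo u v) k :=
  eval₂Hom (C.comp (algebraMap K k)) fun x =>
    if x = u then C θ * ∑ l, X l else if x = v then ∑ l, X l
    else if h : x ∈ Set.Ioo u v then X ⟨x, h⟩ else 0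

theorem intervalSpecialization_X_left :
    intervalSpecialization K u v θ (X u) = C θ * ∑ l, X l := by
  simp only [intervalSpecialization, eval₂Hom_X', if_true]

theorem intervalSpecialization_X_right (huv : u ≠ v) :
    intervalSpecialization K u v θ (X v) = ∑ l, X l := by
  simp only [intervalSpecialization, eval₂Hom_X', if_neg huv.symm, if_true]

theorem intervalSpecialization_X_coe (i : Set.Ioo u v) :
    intervalSpecialization K u v θ (X (i : L)) = X i := by
  simp only [intervalSpecialization, eval₂Hom_X', if_neg i.2.1.ne', if_neg i.2.2.ne,
    dif_pos i.2]

theorem intervalSpecialization_X_of_notMem (huv : u ≤ v) {x : L} (hx : x ∉ Set.Icc u v) :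
    intervalSpecialization K u v θ (X x) = 0 := by
  have hxu : x ≠ u := by rintro rfl; exact hx ⟨le_rfl, huv⟩
  have hxv : x ≠ v := by rintro rfl; exact hx ⟨huv, le_rfl⟩
  simp only [intervalSpecialization, eval₂Hom_X', if_neg hxu, if_neg hxv,
    dif_neg fun h => hx (Set.Ioo_subset_Icc_self h)]

theorem isHomogeneous_intervalSpecialization {p : MvPolynomial L K} {n : ℕ}
    (hp : p.IsHomogeneous n) : (intervalSpecialization K u v θ p).IsHomogeneous n := by
  have hsum : (∑ l, X l : MvPolynomial (Set.Ioo u v) k).IsHomogeneous 1 :=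
    .sum _ _ _ fun l _ => isHomogeneous_X k l
  rw [← one_mul n]
  refine hp.eval₂ _ _ (fun c => isHomogeneous_C _ _) fun x => ?_
  split_ifs
  exacts [hsum.C_mul θ, hsum, isHomogeneous_X k _, isHomogeneous_zero _ _ 1]

theorem intervalSpecialization_joinMeet_of_notMem (huv : u ≤ v) {a : L} (ha : a ∉ Set.Icc u v)
    (b : L) : intervalSpecialization K u v θ (X a * X b - X (a ⊓ b) * X (a ⊔ b)) = 0 := by
  have hprod : intervalSpecialization K u v θ (X (a ⊓ b)) *
      intervalSpecialization K u v θ (X (a ⊔ b)) = 0 := by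
    by_cases hinf : a ⊓ b ∈ Set.Icc u v
    · have hsup : a ⊔ b ∉ Set.Icc u v := fun hsup =>
        ha ⟨hinf.1.trans inf_le_left, le_sup_left.trans hsup.2⟩
      rw [intervalSpecialization_X_of_notMem huv hsup, mul_zero]
    · rw [intervalSpecialization_X_of_notMem huv hinf, zero_mul]
  rw [map_sub, map_mul, map_mul, hprod, intervalSpecialization_X_of_notMem huv ha, zero_mul,
    sub_zero]

theorem intervalSpecialization_joinMeet_coe {i j : Set.Ioo u v} (hinf : (i ⊓ j : L) = u)
    (hsup : (i ⊔ j : L) = v) :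
    intervalSpecialization K u v θ (X (i : L) * X (j : L) - X (i ⊓ j : L) * X (i ⊔ j : L)) =
      X i * X j - C θ * (∑ l, X l) ^ 2 := by
  simp only [hinf, hsup, map_sub, map_mul, intervalSpecialization_X_coe,
    intervalSpecialization_X_left, intervalSpecialization_X_right (i.2.1.trans i.2.2).ne]
  ring

theorem map_joinMeetIdeal_le_offDiagIdeal
    (hpair : (Set.Ioo u v).Pairwise fun x y => x ⊓ y = u ∧ x ⊔ y = v) (huv : u ≤ v) :
    (joinMeetIdeal K L).map (intervalSpecialization K u v θ) ≤ offDiagIdeal (Set.Ioo u v) θ := by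
  refine Ideal.map_le_iff_le_comap.2 (Ideal.span_le.2 ?_)
  rintro _ ⟨a, b, hab, hba, rfl⟩
  rw [SetLike.mem_coe, Ideal.mem_comap]
  by_cases ha : a ∈ Set.Icc u v
  swap
  · rw [intervalSpecialization_joinMeet_of_notMem huv ha]
    exact zero_mem _
  by_cases hb : b ∈ Set.Icc u v
  swap
  · rw [mul_comm, inf_comm, sup_comm, intervalSpecialization_joinMeet_of_notMem huv hb]
    exact zero_mem _
  lift a to Set.Ioo u v using ⟨ha.1.lt_of_ne (by rintro rfl; exact hab hb.1),
    ha.2.lt_of_ne (by rintro rfl; exact hba hb.2)⟩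
  lift b to Set.Ioo u v using ⟨hb.1.lt_of_ne (by rintro rfl; exact hba ha.1),
    hb.2.lt_of_ne (by rintro rfl; exact hab ha.2)⟩
  have hne : a ≠ b := by rintro rfl; exact hab le_rfl
  obtain ⟨hinf, hsup⟩ := hpair a.2 b.2 (Subtype.coe_ne_coe.2 hne)
  rw [intervalSpecialization_joinMeet_coe hinf hsup]
  exact Ideal.subset_span ⟨a, b, hne, rfl⟩

theorem offDiagIdeal_le_map_joinMeetIdeal
    (hpair : (Set.Ioo u v).Pairwise fun x y => x ⊓ y = u ∧ x ⊔ y = v) :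
    offDiagIdeal (Set.Ioo u v) θ ≤ (joinMeetIdeal K L).map (intervalSpecialization K u v θ) := by
  refine Ideal.span_le.2 ?_
  rintro _ ⟨i, j, hij, rfl⟩
  obtain ⟨hinf, hsup⟩ := hpair i.2 j.2 (Subtype.coe_ne_coe.2 hij)
  rw [← intervalSpecialization_joinMeet_coe (K := K) hinf hsup]
  refine Ideal.mem_map_of_mem _ (Ideal.subset_span ⟨i, j, fun h => ?_, fun h => ?_, rfl⟩)
  · exact i.2.1.ne' ((inf_eq_left.2 h).symm.trans hinf)
  · exact j.2.1.ne' ((inf_eq_right.2 h).symm.trans hinf)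

theorem map_joinMeetIdeal_eq_offDiagIdeal
    (hpair : (Set.Ioo u v).Pairwise fun x y => x ⊓ y = u ∧ x ⊔ y = v) (huv : u ≤ v) :
    (joinMeetIdeal K L).map (intervalSpecialization K u v θ) = offDiagIdeal (Set.Ioo u v) θ :=
  (map_joinMeetIdeal_le_offDiagIdeal hpair huv).antisymm (offDiagIdeal_le_map_joinMeetIdeal hpair)

end IntervalSpecialization

/-- If `L` is a finite modular non-distributive lattice, then `reg(S/I_L) ≥ 3`: in the
minimal graded free resolution of `S/I_L` some shift satisfies `j - i ≥ 3`. -/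
theorem reg_ge_three_of_modular_nondistributive (K : Type*) [Field K]
    (L : Type*) [Lattice L] [Fintype L] [IsModularLattice L]
    (hnd : ¬ ∀ x y z : L, x ⊓ (y ⊔ z) = (x ⊓ y) ⊔ (x ⊓ z)) :
    Nonempty (MinGradedFreeRes K L (joinMeetIdeal K L)) ∧
      ∀ F : MinGradedFreeRes K L (joinMeetIdeal K L),
        ∃ i, ∃ b : F.B i, i + 3 ≤ F.deg i b := by
  refine ⟨nonempty_minGradedFreeRes (fun p hp => homogeneousComponent_mem_joinMeetIdeal hp)
    fun p hp => coeff_zero_eq_zero_of_mem_joinMeetIdeal hp, fun F => ?_⟩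
  obtain ⟨u, v, hcard, hpair⟩ := exists_Ioo_pairwise_of_not_distrib hnd
  have : Fintype (Set.Ioo u v) := Fintype.ofFinite _
  rw [← Nat.card_coe_set_eq, Nat.card_eq_fintype_card] at hcard
  obtain ⟨p⟩ : Nonempty (Set.Ioo u v) := Fintype.card_pos_iff.1 (pos_of_gt hcard)
  obtain ⟨θ, hθ, hθ'⟩ := exists_ne_zero_one_sub_mul_ne_zero
    ((Fintype.card (Set.Ioo u v) : AlgebraicClosure K) ^ 2)
  have hmap := map_joinMeetIdeal_eq_offDiagIdeal (K := K) (θ := θ) hpair (p.2.1.trans p.2.2).le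
  by_contra! hreg
  refine not_idealOfVars_pow_three_le_offDiagIdeal (one_lt_two.trans hcard) hθ ?_
  rw [← hmap]
  refine F.idealOfVars_pow_le_map (fun p hp => homogeneousComponent_mem_joinMeetIdeal hp)
    (fun p n hp => isHomogeneous_intervalSpecialization hp) ?_ (hreg _)
  rw [hmap]
  exact idealOfVars_le_radical_offDiagIdeal hcard hθ hθ'
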